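/- Let σ0 > 0, β ∈ (0,1) and p ≥ 1 an integer; let φ0 = γ_{0,σ0}, T(B) := σ0·√(6β(log 2)B), and for each B ∈ ℕ let t_k be the B-bit thresholds and ω_{k,p} the p-optimal level of the bin R_k = [t_k, t_{k+1}). Then for every ε > 0 there exists B₀ such that for all B ≥ B₀, for every k with [t_k, t_{k+1}] ⊆ [−T(B), T(B)] and every c ∈ [t_k, t_{k+1}]: (1−ε)·(τ_k^{p+1}/((p+1)·2^p))·φ0(c) ≤ ∫_{t_k}^{t_{k+1}} |t − ω_{k,p}|^p φ0(t) dt ≤ (1+ε)·(τ_k^{p+1}/((p+1)·2^p))·φ0(c), where τ_k = t_{k+1} − t_k. -/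

import Mathlib

/-!
On the window `[-T(B), T(B)]` the compressor density `gaussPdf (√3 σ0)` is at least a constant times
`2 ^ (-β B)`, while every inner bin carries `G`-mass exactly `2 ^ (-B)`. Hence the bin widths `τ` are
at most a constant times `2 ^ (-(1 - β) B)`, and `T(B) τ → 0` uniformly in the bin
(`bin_width_le`, `tendsto_window_mul_width`). As `log (gaussPdf σ0)` has slope at most `T(B) / σ0²`
on the window, `gaussPdf σ0` is constant on each bin up to a factor tending to `1`
(`gaussPdf_le_exp_mul`).

It remains to treat a constant density, for which the optimal level is the midpoint `m` and
`∫ |s - m| ^ p = τ ^ (p + 1) / ((p + 1) 2 ^ p)` (`integral_midpoint`, `integral_midpoint_le`).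
For the lower bound the midpoint inequality is applied to the level `ω`; for the upper bound the
optimality of `ω` is tested against the level `m`.
-/

open MeasureTheory

/-- Centered Gaussian pdf of standard deviation σ. -/
noncomputable def gaussPdf (σ t : ℝ) : ℝ :=
  (2 * Real.pi * σ ^ 2) ^ (-(1:ℝ) / 2) * Real.exp (-(t ^ 2) / (2 * σ ^ 2))

/-- The optimal compressor associated with γ_{0,σ0}: the cumulative distribution
function of the centered Gaussian of variance 3σ0². -/
noncomputable def compressorG (σ0 lam : ℝ) : ℝ :=
  ∫ t in Set.Iic lam, gaussPdf (Real.sqrt 3 * σ0) t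

/-- The transition value T(B) = σ0·√(6β(log 2)B). -/
noncomputable def transitionT (σ0 β : ℝ) (B : ℕ) : ℝ :=
  σ0 * Real.sqrt (6 * β * Real.log 2 * (B : ℝ))

lemma gaussPdf_const_pos {σ : ℝ} (hσ : 0 < σ) : 0 < (2 * Real.pi * σ ^ 2) ^ (-(1:ℝ) / 2) :=
  Real.rpow_pos_of_pos (by have := Real.pi_pos; positivity) _

lemma gaussPdf_pos {σ : ℝ} (hσ : 0 < σ) (s : ℝ) : 0 < gaussPdf σ s :=
  mul_pos (gaussPdf_const_pos hσ) (Real.exp_pos _)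

lemma continuous_gaussPdf (σ : ℝ) : Continuous (gaussPdf σ) := by
  unfold gaussPdf
  fun_prop

lemma integrable_gaussPdf {σ : ℝ} (hσ : 0 < σ) : Integrable (gaussPdf σ) := by
  have h := (integrable_exp_neg_mul_sq (b := 1 / (2 * σ ^ 2)) (by positivity)).const_mul
    ((2 * Real.pi * σ ^ 2) ^ (-(1:ℝ) / 2))
  refine h.congr (Filter.Eventually.of_forall fun s => ?_)
  simp only [gaussPdf]
  congr 2
  ring

/-- The slope of `log (gaussPdf σ)` on `[-T, T]` is at most `T / σ ^ 2`. -/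
lemma gaussPdf_le_exp_mul {σ T a b s c η : ℝ} (hσ : 0 < σ)
    (haT : -T ≤ a) (hbT : b ≤ T) (hη : T * (b - a) ≤ η * σ ^ 2)
    (hs : s ∈ Set.Icc a b) (hc : c ∈ Set.Icc a b) :
    gaussPdf σ s ≤ Real.exp η * gaussPdf σ c := by
  obtain ⟨hs1, hs2⟩ := hs
  obtain ⟨hc1, hc2⟩ := hc
  have key : -(s ^ 2) / (2 * σ ^ 2) ≤ η + -(c ^ 2) / (2 * σ ^ 2) := by
    rw [div_le_iff₀ (by positivity), add_mul, div_mul_cancel₀ _ (by positivity)]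
    have h1 : |c - s| ≤ b - a := abs_le.2 ⟨by linarith, by linarith⟩
    have h2 : |c + s| ≤ 2 * T := abs_le.2 ⟨by linarith, by linarith⟩
    have h3 : c ^ 2 - s ^ 2 ≤ (b - a) * (2 * T) := by
      calc c ^ 2 - s ^ 2 = (c - s) * (c + s) := by ring
        _ ≤ |c - s| * |c + s| := by rw [← abs_mul]; exact le_abs_self _
        _ ≤ _ := mul_le_mul h1 h2 (abs_nonneg _) (by linarith)
    linarith
  calc gaussPdf σ s
      ≤ (2 * Real.pi * σ ^ 2) ^ (-(1:ℝ) / 2) * Real.exp (η + -(c ^ 2) / (2 * σ ^ 2)) :=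
        mul_le_mul_of_nonneg_left (Real.exp_le_exp.2 key) (gaussPdf_const_pos hσ).le
    _ = Real.exp η * gaussPdf σ c := by rw [Real.exp_add, gaussPdf]; ring

/-- The distortion of the midpoint level under a constant unit density. -/
lemma integral_midpoint {a b : ℝ} (hab : a ≤ b) (p : ℕ) :
    ∫ s in a..b, |s - (a + b) / 2| ^ p = (b - a) ^ (p + 1) / (((p : ℝ) + 1) * 2 ^ p) := by
  have hcont : Continuous fun s : ℝ => |s - (a + b) / 2| ^ p := by fun_prop
  rw [← intervalIntegral.integral_add_adjacent_intervals
    (hcont.intervalIntegrable a ((a + b) / 2)) (hcont.intervalIntegrable ((a + b) / 2) b)]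
  have h1 : ∫ s in a..((a + b) / 2), |s - (a + b) / 2| ^ p
      = ((b - a) / 2) ^ (p + 1) / ((p : ℝ) + 1) := by
    have h := integral_pow_abs_sub_uIoc (a := (a + b) / 2) (b := a) (n := p)
    rw [Set.uIoc_of_ge (by linarith)] at h
    rw [intervalIntegral.integral_of_le (by linarith), h, abs_sub_comm,
      abs_of_nonneg (by linarith)]
    congr 2
    ring
  have h2 : ∫ s in ((a + b) / 2)..b, |s - (a + b) / 2| ^ p
      = ((b - a) / 2) ^ (p + 1) / ((p : ℝ) + 1) := by
    have h := integral_pow_abs_sub_uIoc (a := (a + b) / 2) (b := b) (n := p)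
    rw [Set.uIoc_of_le (by linarith)] at h
    rw [intervalIntegral.integral_of_le (by linarith), h, abs_of_nonneg (by linarith)]
    congr 2
    ring
  rw [h1, h2, div_pow]
  field_simp
  ring

/-- Under a constant density the midpoint is an optimal level: averaging over the reflection
`s ↦ a + b - s` and using convexity of `x ↦ |x| ^ p` moves any level `lam` to the midpoint. -/
lemma integral_midpoint_le {a b : ℝ} (hab : a ≤ b) {p : ℕ} (hp : 1 ≤ p) (lam : ℝ) :
    ∫ s in a..b, |s - (a + b) / 2| ^ p ≤ ∫ s in a..b, |s - lam| ^ p := by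
  have hrefl : ∫ s in a..b, |a + b - s - lam| ^ p = ∫ s in a..b, |s - lam| ^ p := by
    have h := intervalIntegral.integral_comp_sub_left (a := a) (b := b)
      (fun s : ℝ => |s - lam| ^ p) (a + b)
    simpa using h
  have hle : ∫ s in a..b, 2 * |s - (a + b) / 2| ^ p
      ≤ ∫ s in a..b, (|s - lam| ^ p + |a + b - s - lam| ^ p) := by
    refine intervalIntegral.integral_mono_on hab (Continuous.intervalIntegrable (by fun_prop) _ _)
      (Continuous.intervalIntegrable (by fun_prop) _ _) fun s _ => ?_
    have h1 := add_pow_le (abs_nonneg (s - lam)) (abs_nonneg (a + b - s - lam)) p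
    have h2 : 2 * |s - (a + b) / 2| ≤ |s - lam| + |a + b - s - lam| := by
      have h := abs_sub (s - lam) (a + b - s - lam)
      have h' : s - lam - (a + b - s - lam) = 2 * (s - (a + b) / 2) := by ring
      rw [h', abs_mul, abs_two] at h
      exact h
    have h3 := (pow_le_pow_left₀ (by positivity) h2 p).trans h1
    rw [mul_pow] at h3
    obtain ⟨q, rfl⟩ : ∃ q, p = q + 1 := ⟨p - 1, by omega⟩
    rw [Nat.add_sub_cancel, pow_succ (2 : ℝ) q, mul_assoc] at h3
    exact le_of_mul_le_mul_left h3 (by positivity)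
  rw [intervalIntegral.integral_const_mul, intervalIntegral.integral_add
    (Continuous.intervalIntegrable (by fun_prop) _ _)
    (Continuous.intervalIntegrable (by fun_prop) _ _), hrefl] at hle
  linarith

lemma transitionT_nonneg {σ0 : ℝ} (hσ0 : 0 < σ0) (β : ℝ) (B : ℕ) : 0 ≤ transitionT σ0 β B :=
  mul_nonneg hσ0.le (Real.sqrt_nonneg _)

lemma transitionT_sq {σ0 β : ℝ} (hβ : 0 < β) (B : ℕ) :
    transitionT σ0 β B ^ 2 = σ0 ^ 2 * (6 * β * Real.log 2 * B) := by
  have := Real.log_pos one_lt_two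
  rw [transitionT, mul_pow, Real.sq_sqrt (by positivity)]

lemma compressorG_sub {σ0 : ℝ} (hσ0 : 0 < σ0) (a b : ℝ) :
    compressorG σ0 b - compressorG σ0 a = ∫ s in a..b, gaussPdf (Real.sqrt 3 * σ0) s := by
  have h := integrable_gaussPdf (σ := Real.sqrt 3 * σ0) (by positivity)
  exact intervalIntegral.integral_Iic_sub_Iic h.integrableOn h.integrableOn

/-- A bin inside `[-T(B), T(B)]` has compressor density at least a constant times
`2 ^ (-β B)`, so a bin of `G`-mass `2 ^ (-B)` has width at most a constant times
`2 ^ (-(1 - β) B)`. -/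
lemma bin_width_le {σ0 β a b : ℝ} (hσ0 : 0 < σ0) (hβ : 0 < β) {B : ℕ} (hab : a ≤ b)
    (ha : -(transitionT σ0 β B) ≤ a) (hb : b ≤ transitionT σ0 β B)
    (hG : compressorG σ0 b - compressorG σ0 a = 2 ^ (-(B : ℝ))) :
    (2 * Real.pi * (Real.sqrt 3 * σ0) ^ 2) ^ (-(1:ℝ) / 2) * (b - a)
      ≤ ((2 : ℝ) ^ (-(1 - β))) ^ B := by
  set A := (2 * Real.pi * (Real.sqrt 3 * σ0) ^ 2) ^ (-(1:ℝ) / 2) with hA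
  have hApos : 0 < A := gaussPdf_const_pos (by positivity)
  have h1 : A * (2 : ℝ) ^ (-(β * B)) * (b - a) ≤ 2 ^ (-(B : ℝ)) := by
    rw [← hG, compressorG_sub hσ0]
    have hc : ∫ _ in a..b, A * (2 : ℝ) ^ (-(β * B)) = A * (2 : ℝ) ^ (-(β * B)) * (b - a) := by
      rw [intervalIntegral.integral_const, smul_eq_mul, mul_comm]
    rw [← hc]
    refine intervalIntegral.integral_mono_on hab (by simp)
      ((continuous_gaussPdf _).intervalIntegrable _ _) fun s hs => ?_
    unfold gaussPdf
    rw [← hA, Real.rpow_def_of_pos two_pos]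
    refine mul_le_mul_of_nonneg_left (Real.exp_le_exp.2 ?_) hApos.le
    have hs2 : s ^ 2 ≤ transitionT σ0 β B ^ 2 :=
      sq_le_sq' (by linarith [hs.1]) (by linarith [hs.2])
    rw [transitionT_sq hβ] at hs2
    rw [le_div_iff₀ (by positivity), mul_pow, Real.sq_sqrt (by norm_num)]
    linarith
  have h2 : (2 : ℝ) ^ (-(B : ℝ)) = 2 ^ (-(β * B)) * ((2 : ℝ) ^ (-(1 - β))) ^ B := by
    rw [← Real.rpow_natCast, ← Real.rpow_mul two_pos.le, ← Real.rpow_add two_pos]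
    congr 1
    ring
  rw [h2] at h1
  have h3 : (0 : ℝ) < 2 ^ (-(β * B)) := Real.rpow_pos_of_pos two_pos _
  refine le_of_mul_le_mul_left ?_ h3
  linarith

lemma tendsto_window_mul_width {σ0 β : ℝ} (hσ0 : 0 < σ0) (hβ : β ∈ Set.Ioo (0:ℝ) 1) :
    Filter.Tendsto (fun B : ℕ => transitionT σ0 β B * ((2 : ℝ) ^ (-(1 - β))) ^ B)
      Filter.atTop (nhds 0) := by
  set r := (2 : ℝ) ^ (-(1 - β))
  have hr0 : 0 ≤ r := Real.rpow_nonneg two_pos.le _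
  have hr1 : r < 1 := Real.rpow_lt_one_of_one_lt_of_neg one_lt_two (by linarith [hβ.2])
  set K := σ0 ^ 2 * (6 * β * Real.log 2)
  have h1 : Filter.Tendsto (fun B : ℕ => K * (B * r ^ B) + r ^ B) Filter.atTop (nhds 0) := by
    simpa using ((tendsto_self_mul_const_pow_of_lt_one hr0 hr1).const_mul K).add
      (tendsto_pow_atTop_nhds_zero_of_lt_one hr0 hr1)
  refine squeeze_zero (fun B => mul_nonneg (transitionT_nonneg hσ0 β B) (pow_nonneg hr0 B))
    (fun B => ?_) h1
  -- `T ≤ T ^ 2 + 1` replaces the square root by an affine function of `B`.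
  have h2 : transitionT σ0 β B ≤ K * B + 1 := by
    have h := transitionT_sq (σ0 := σ0) hβ.1 B
    have h' : transitionT σ0 β B ^ 2 = K * B := by rw [h]; ring
    nlinarith [sq_nonneg (transitionT σ0 β B - 1), transitionT_nonneg hσ0 β B]
  calc transitionT σ0 β B * r ^ B ≤ (K * B + 1) * r ^ B :=
        mul_le_mul_of_nonneg_right h2 (pow_nonneg hr0 B)
    _ = _ := by ring

theorem bin_distortion_asymptotics
    (σ0 β : ℝ) (hσ0 : 0 < σ0) (hβ : β ∈ Set.Ioo (0:ℝ) 1)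
    (p : ℕ) (hp : 1 ≤ p)
    (t : ℕ → ℕ → ℝ)
    (ht : ∀ B k : ℕ, 2 ≤ k → k ≤ 2 ^ B →
      compressorG σ0 (t B k) = ((k : ℝ) - 1) * 2 ^ (-(B : ℝ)))
    (ω : ℕ → ℕ → ℝ)
    (hω : ∀ B k : ℕ, 2 ≤ k → k + 1 ≤ 2 ^ B → ∀ lam : ℝ,
      ∫ s in Set.Ico (t B k) (t B (k + 1)), |s - ω B k| ^ p * gaussPdf σ0 s ≤
        ∫ s in Set.Ico (t B k) (t B (k + 1)), |s - lam| ^ p * gaussPdf σ0 s) :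
    ∀ ε : ℝ, 0 < ε → ∃ B₀ : ℕ, ∀ B : ℕ, B₀ ≤ B → ∀ k : ℕ, 2 ≤ k → k + 1 ≤ 2 ^ B →
      Set.Icc (t B k) (t B (k + 1))
          ⊆ Set.Icc (-(transitionT σ0 β B)) (transitionT σ0 β B) →
      ∀ c ∈ Set.Icc (t B k) (t B (k + 1)),
        (1 - ε) * ((t B (k + 1) - t B k) ^ (p + 1) / (((p : ℝ) + 1) * 2 ^ p)) *
            gaussPdf σ0 c ≤
          (∫ s in Set.Ico (t B k) (t B (k + 1)), |s - ω B k| ^ p * gaussPdf σ0 s) ∧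
        (∫ s in Set.Ico (t B k) (t B (k + 1)), |s - ω B k| ^ p * gaussPdf σ0 s) ≤
          (1 + ε) * ((t B (k + 1) - t B k) ^ (p + 1) / (((p : ℝ) + 1) * 2 ^ p)) *
            gaussPdf σ0 c := by
  intro ε hε
  set A := (2 * Real.pi * (Real.sqrt 3 * σ0) ^ 2) ^ (-(1:ℝ) / 2) with hA
  have hApos : 0 < A := gaussPdf_const_pos (by positivity)
  -- With `η = log (1 + ε) ≤ ε` both `exp η ≤ 1 + ε` and `1 - ε ≤ exp (-η)` hold.
  set η := Real.log (1 + ε) with hη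
  have hηpos : 0 < η := Real.log_pos (by linarith)
  have hexp : Real.exp η = 1 + ε := Real.exp_log (by linarith)
  have hηε : η ≤ ε := by have := Real.log_le_sub_one_of_pos (x := 1 + ε) (by linarith); linarith
  have hexp' : 1 - ε ≤ Real.exp (-η) := by have := Real.add_one_le_exp (-η); linarith
  obtain ⟨B₀, hB₀⟩ := Filter.eventually_atTop.1
    ((tendsto_window_mul_width hσ0 hβ).eventually_le_const
      (show (0 : ℝ) < A * (η * σ0 ^ 2) by positivity))
  refine ⟨B₀, fun B hB k hk2 hk hsub c hc => ?_⟩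
  have hGk := ht B k hk2 (by omega)
  have hGk1 := ht B (k + 1) (by omega) hk
  have hω' := hω B k hk2 hk ((t B k + t B (k + 1)) / 2)
  generalize t B k = a at *
  generalize t B (k + 1) = b at *
  generalize ω B k = w at *
  have hG : compressorG σ0 b - compressorG σ0 a = 2 ^ (-(B : ℝ)) := by
    rw [hGk, hGk1]; push_cast; ring
  have hab : a ≤ b := hc.1.trans hc.2
  have haT := (hsub (Set.left_mem_Icc.2 hab)).1
  have hbT := (hsub (Set.right_mem_Icc.2 hab)).2
  have hsmall : transitionT σ0 β B * (b - a) ≤ η * σ0 ^ 2 := by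
    have h1 := mul_le_mul_of_nonneg_left (bin_width_le hσ0 hβ.1 hab haT hbT hG)
      (transitionT_nonneg hσ0 β B)
    refine le_of_mul_le_mul_left ?_ hApos
    have h2 := hB₀ B hB
    rw [← hA] at h1
    linarith
  have hcφ := gaussPdf_pos hσ0 c
  have hcont := continuous_gaussPdf σ0
  have hIco : ∀ lam : ℝ, ∫ s in Set.Ico a b, |s - lam| ^ p * gaussPdf σ0 s
      = ∫ s in a..b, |s - lam| ^ p * gaussPdf σ0 s := fun lam => by
    rw [integral_Ico_eq_integral_Ioc, intervalIntegral.integral_of_le hab]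
  rw [hIco, hIco] at hω'
  rw [hIco, ← integral_midpoint hab p]
  have hM0 : 0 ≤ ∫ s in a..b, |s - (a + b) / 2| ^ p :=
    intervalIntegral.integral_nonneg hab fun s _ => by positivity
  constructor
  · calc (1 - ε) * (∫ s in a..b, |s - (a + b) / 2| ^ p) * gaussPdf σ0 c
        ≤ Real.exp (-η) * (∫ s in a..b, |s - (a + b) / 2| ^ p) * gaussPdf σ0 c := by gcongr
      _ ≤ Real.exp (-η) * (∫ s in a..b, |s - w| ^ p) * gaussPdf σ0 c := by
          have := integral_midpoint_le hab hp w
          gcongr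
      _ = ∫ s in a..b, |s - w| ^ p * (Real.exp (-η) * gaussPdf σ0 c) := by
          rw [intervalIntegral.integral_mul_const]; ring
      _ ≤ _ := by
          refine intervalIntegral.integral_mono_on hab
            (Continuous.intervalIntegrable (by fun_prop) _ _)
            (Continuous.intervalIntegrable (by fun_prop) _ _) fun s hs => ?_
          refine mul_le_mul_of_nonneg_left ?_ (by positivity)
          rw [Real.exp_neg, inv_mul_le_iff₀ (Real.exp_pos _)]
          exact gaussPdf_le_exp_mul hσ0 haT hbT hsmall hc hs
  · calc _ ≤ ∫ s in a..b, |s - (a + b) / 2| ^ p * gaussPdf σ0 s := hω'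
      _ ≤ ∫ s in a..b, |s - (a + b) / 2| ^ p * ((1 + ε) * gaussPdf σ0 c) := by
          refine intervalIntegral.integral_mono_on hab
            (Continuous.intervalIntegrable (by fun_prop) _ _)
            (Continuous.intervalIntegrable (by fun_prop) _ _) fun s hs => ?_
          refine mul_le_mul_of_nonneg_left ?_ (by positivity)
          rw [← hexp]
          exact gaussPdf_le_exp_mul hσ0 haT hbT hsmall hs hc
      _ = _ := by rw [intervalIntegral.integral_mul_const]; ring
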